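/- arXiv:2106.00094 — 2 statements merged into one kernel-verified Lean document; each statement's English description precedes it below -/
import Mathlib

section
/- A pair (γ, υ) ∈ Iw_{GL_g} × M_g(pℤ_p) satisfies ᵗγ J̆ υ = ᵗυ J̆ γ (i.e. lies in T_0) if and only if there exist α_b, α_d ∈ M_g(ℤ_p) such that the block matrix [[γ, α_b],[υ, α_d]] belongs to GSp_{2g}(ℚ_p) ∩ M_{2g}(ℤ_p). -/
open Matrix

/-- The `g × g` anti-diagonal matrix `J̆`: the `(i, j)` entry is `1` exactly when
`j = g + 1 - i` in one-based numbering, i.e. `i + j + 1 = g` in zero-based numbering. -/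
def Jb (g : ℕ) (R : Type*) [CommRing R] : Matrix (Fin g) (Fin g) R :=
  Matrix.of fun i j => if (i : ℕ) + (j : ℕ) + 1 = g then 1 else 0

/-- The standard symplectic matrix `J = [[0, -J̆], [J̆, 0]]` of size `2g`. -/
def Jmat (g : ℕ) (R : Type*) [CommRing R] :
    Matrix (Fin g ⊕ Fin g) (Fin g ⊕ Fin g) R :=
  Matrix.fromBlocks 0 (-(Jb g R)) (Jb g R) 0

/-- Membership in the symplectic similitude group `GSp_{2g}(R)`:
`ᵗγ J γ = ς · J` for some unit `ς` (the similitude factor). -/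
def IsGSp {g : ℕ} {R : Type*} [CommRing R]
    (M : Matrix (Fin g ⊕ Fin g) (Fin g ⊕ Fin g) R) : Prop :=
  IsUnit M.det ∧ ∃ s : Rˣ, Mᵀ * Jmat g R * M = (s : R) • Jmat g R

/-- The Iwahori subgroup `Iw_{GL_g}` of `GL_g(ℤ_p)`: invertible matrices over `ℤ_p`
whose reduction mod `p` is upper triangular. -/
def IwGL (p g : ℕ) [Fact p.Prime] : Set (Matrix (Fin g) (Fin g) ℤ_[p]) :=
  {M | IsUnit M.det ∧ ∀ i j : Fin g, j < i → (p : ℤ_[p]) ∣ M i j}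

/-- The strict Iwahori subgroup `Iw⁺_{GL_g}` of `GL_g(ℤ_p)`: reduction mod `p` is diagonal. -/
def IwGLplus (p g : ℕ) [Fact p.Prime] : Set (Matrix (Fin g) (Fin g) ℤ_[p]) :=
  {M | IsUnit M.det ∧ ∀ i j : Fin g, i ≠ j → (p : ℤ_[p]) ∣ M i j}

/-- `T_{GL_g,0}`: diagonal matrices in `GL_g(ℤ_p)`. -/
def TGL (p g : ℕ) [Fact p.Prime] : Set (Matrix (Fin g) (Fin g) ℤ_[p]) :=
  {M | IsUnit M.det ∧ ∀ i j : Fin g, i ≠ j → M i j = 0}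

/-- `U_{GL_g,0}`: upper triangular unipotent matrices in `GL_g(ℤ_p)`. -/
def UGL0 (p g : ℕ) [Fact p.Prime] : Set (Matrix (Fin g) (Fin g) ℤ_[p]) :=
  {M | (∀ i j : Fin g, j < i → M i j = 0) ∧ ∀ i : Fin g, M i i = 1}

/-- `U_{GL_g,1}`: upper triangular unipotent matrices congruent to `1` mod `p`. -/
def UGL1 (p g : ℕ) [Fact p.Prime] : Set (Matrix (Fin g) (Fin g) ℤ_[p]) :=
  {M | M ∈ UGL0 p g ∧ ∀ i j : Fin g, i < j → (p : ℤ_[p]) ∣ M i j}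

/-- `U^{opp}_{GL_g,1}`: lower triangular unipotent matrices in `GL_g(ℤ_p)`
congruent to `1` mod `p`. -/
def UGLopp1 (p g : ℕ) [Fact p.Prime] : Set (Matrix (Fin g) (Fin g) ℤ_[p]) :=
  {M | (∀ i j : Fin g, i < j → M i j = 0) ∧ (∀ i : Fin g, M i i = 1) ∧
    ∀ i j : Fin g, j < i → (p : ℤ_[p]) ∣ M i j}

/-- `B_{GL_g,0}`: upper triangular matrices in `GL_g(ℤ_p)`. -/
def BGL0 (p g : ℕ) [Fact p.Prime] : Set (Matrix (Fin g) (Fin g) ℤ_[p]) :=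
  {M | IsUnit M.det ∧ ∀ i j : Fin g, j < i → M i j = 0}

/-- Entrywise inclusion `M(ℤ_p) → M(ℚ_p)`. -/
def toQ {p : ℕ} [Fact p.Prime] {m n : Type*} (M : Matrix m n ℤ_[p]) :
    Matrix m n ℚ_[p] :=
  M.map fun x => (x : ℚ_[p])

/-!
The upper left block of `ᵗM J M` for `M = [[γ, α_b], [υ, α_d]]` is `ᵗυ J̆ γ - ᵗγ J̆ υ`, while that
of `J` vanishes; so a symplectic similitude forces `ᵗγ J̆ υ = ᵗυ J̆ γ`. Conversely, under this
relation `α_b = 0` and `α_d = J̆ (adj ᵗγ) J̆` give `ᵗM J M = det γ • J`. The adjugate, unlike the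
inverse, has entries in the ring of entries of `γ`.
-/

section AntiDiagonal

variable (g : ℕ) (R : Type*) [CommRing R]

lemma Jb_eq_permMatrix : Jb g R = (Fin.revPerm : Equiv.Perm (Fin g)).permMatrix R := by
  ext i j
  simp only [Jb, of_apply, PEquiv.toMatrix_apply, Equiv.toPEquiv_apply, Option.mem_some_iff,
    Fin.revPerm_apply, Fin.ext_iff, Fin.val_rev]
  congr 1
  exact propext (by omega)

lemma transpose_Jb : (Jb g R)ᵀ = Jb g R := by
  rw [Jb_eq_permMatrix, transpose_permMatrix]
  rfl

lemma Jb_mul_Jb : Jb g R * Jb g R = 1 := by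
  rw [Jb_eq_permMatrix, ← permMatrix_mul, ← permMatrix_one]
  congr 1
  exact Equiv.ext Fin.rev_rev

lemma Jmat_mul_Jmat : Jmat g R * Jmat g R = -1 := by
  simp [Jmat, fromBlocks_multiply, Jb_mul_Jb, ← fromBlocks_one, fromBlocks_neg]

lemma isUnit_det_Jmat : IsUnit (Jmat g R).det :=
  isUnit_det_of_left_inverse (B := -Jmat g R) (by rw [neg_mul, Jmat_mul_Jmat, neg_neg])

end AntiDiagonal

section BaseChange

variable {g : ℕ} {R S : Type*} [CommRing R] [CommRing S] (f : R →+* S)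

lemma map_Jb : (Jb g R).map f = Jb g S := by
  ext i j
  simp [Jb, apply_ite f]

lemma map_Jmat : (Jmat g R).map f = Jmat g S := by
  simp [Jmat, fromBlocks_map, Matrix.map_neg, map_Jb]

lemma map_transpose_mul_Jmat_mul (M : Matrix (Fin g ⊕ Fin g) (Fin g ⊕ Fin g) R) :
    (Mᵀ * Jmat g R * M).map f = (M.map f)ᵀ * Jmat g S * M.map f := by
  rw [Matrix.map_mul, Matrix.map_mul, map_Jmat, transpose_map]

end BaseChange

section Similitude

variable {g : ℕ} {R : Type*} [CommRing R]

lemma fromBlocks_transpose_mul_Jmat_mul (a b c d : Matrix (Fin g) (Fin g) R) :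
    (fromBlocks a b c d)ᵀ * Jmat g R * fromBlocks a b c d =
      fromBlocks (cᵀ * Jb g R * a - aᵀ * Jb g R * c) (cᵀ * Jb g R * b - aᵀ * Jb g R * d)
        (dᵀ * Jb g R * a - bᵀ * Jb g R * c) (dᵀ * Jb g R * b - bᵀ * Jb g R * d) := by
  simp [Jmat, fromBlocks_transpose, fromBlocks_multiply, sub_eq_add_neg]

lemma isGSp_of_transpose_mul_Jmat_mul_eq_smul {M : Matrix (Fin g ⊕ Fin g) (Fin g ⊕ Fin g) R}
    {s : R} (hs : IsUnit s) (h : Mᵀ * Jmat g R * M = s • Jmat g R) : IsGSp M := by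
  refine ⟨?_, hs.unit, h⟩
  have hdet : IsUnit (Mᵀ * Jmat g R * M).det := by
    rw [h, det_smul]
    exact (hs.pow _).mul (isUnit_det_Jmat g R)
  rw [det_mul] at hdet
  exact isUnit_of_mul_isUnit_right hdet

/-- The block matrix `[[γ, 0], [υ, J̆ (adj ᵗγ) J̆]]`, which completes the first block column
`(γ, υ)` to a symplectic similitude of factor `det γ`. -/
def symplecticCompletion (γ υ : Matrix (Fin g) (Fin g) R) :
    Matrix (Fin g ⊕ Fin g) (Fin g ⊕ Fin g) R :=
  fromBlocks γ 0 υ (Jb g R * γᵀ.adjugate * Jb g R)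

lemma transpose_mul_Jb_mul_adjugate (γ : Matrix (Fin g) (Fin g) R) :
    γᵀ * Jb g R * (Jb g R * γᵀ.adjugate * Jb g R) = γ.det • Jb g R :=
  calc γᵀ * Jb g R * (Jb g R * γᵀ.adjugate * Jb g R)
      = γᵀ * (Jb g R * Jb g R) * γᵀ.adjugate * Jb g R := by simp only [Matrix.mul_assoc]
    _ = γ.det • Jb g R := by
      rw [Jb_mul_Jb, Matrix.mul_one, mul_adjugate, det_transpose, smul_mul, Matrix.one_mul]

lemma symplecticCompletion_transpose_mul_Jmat_mul {γ υ : Matrix (Fin g) (Fin g) R}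
    (h : γᵀ * Jb g R * υ = υᵀ * Jb g R * γ) :
    (symplecticCompletion γ υ)ᵀ * Jmat g R * symplecticCompletion γ υ = γ.det • Jmat g R := by
  have upper_right := transpose_mul_Jb_mul_adjugate γ
  have lower_left : (Jb g R * γᵀ.adjugate * Jb g R)ᵀ * Jb g R * γ = γ.det • Jb g R := by
    simpa only [transpose_mul, transpose_transpose, transpose_smul, transpose_Jb,
      Matrix.mul_assoc] using congrArg transpose upper_right
  rw [symplecticCompletion, fromBlocks_transpose_mul_Jmat_mul, h, upper_right, lower_left]
  simp [Jmat, fromBlocks_smul]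

end Similitude

theorem statement9_general {g : ℕ} {R S : Type*} [CommRing R] [CommRing S] {f : R →+* S}
    (hf : Function.Injective f) {γ : Matrix (Fin g) (Fin g) R} (υ : Matrix (Fin g) (Fin g) R)
    (hγ : IsUnit (f γ.det)) :
    γᵀ * Jb g R * υ = υᵀ * Jb g R * γ ↔
      ∃ αb αd : Matrix (Fin g) (Fin g) R, IsGSp ((fromBlocks γ αb υ αd).map f) := by
  constructor
  · intro h
    have similitude : ((symplecticCompletion γ υ).map f)ᵀ * Jmat g S *
        (symplecticCompletion γ υ).map f = f γ.det • Jmat g S := by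
      rw [← map_transpose_mul_Jmat_mul, symplecticCompletion_transpose_mul_Jmat_mul h,
        Matrix.map_smul' f _ _ (map_mul f), map_Jmat]
    exact ⟨0, _, isGSp_of_transpose_mul_Jmat_mul_eq_smul hγ similitude⟩
  · rintro ⟨αb, αd, -, s, hs⟩
    rw [← map_transpose_mul_Jmat_mul, fromBlocks_transpose_mul_Jmat_mul, fromBlocks_map, Jmat,
      fromBlocks_smul, smul_zero, fromBlocks_inj] at hs
    have upper_left : υᵀ * Jb g R * γ - γᵀ * Jb g R * υ = 0 :=
      map_injective hf (hs.1.trans (Matrix.map_zero f (map_zero f)).symm)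
    exact (sub_eq_zero.mp upper_left).symm

theorem statement9 (p g : ℕ) [Fact p.Prime] (hg : 1 ≤ g)
    (γ υ : Matrix (Fin g) (Fin g) ℤ_[p]) (hγ : γ ∈ IwGL p g)
    (hυ : ∀ i j : Fin g, (p : ℤ_[p]) ∣ υ i j) :
    γᵀ * Jb g ℤ_[p] * υ = υᵀ * Jb g ℤ_[p] * γ ↔
      ∃ αb αd : Matrix (Fin g) (Fin g) ℤ_[p],
        IsGSp (toQ (Matrix.fromBlocks γ αb υ αd)) :=
  statement9_general (f := PadicInt.Coe.ringHom) Subtype.coe_injective υ (hγ.1.map _)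
end

section
/- The set Ξ := {α ∈ GSp_{2g}(ℚ_p) ∩ M_{2g}(ℤ_p) : α_a ∈ Iw_{GL_g} and α_c ∈ M_g(pℤ_p)} is closed under matrix multiplication, and for every α ∈ Ξ and (γ, υ) ∈ T_0 the pair α·(γ, υ) := (α_aγ + α_bυ, α_cγ + α_dυ) again lies in T_0; moreover (αα')·(γ, υ) = α·(α'·(γ, υ)) for all α, α' ∈ Ξ, so this defines a left action of the monoid Ξ on T_0. -/
open Matrix

/-- The set `T₀` of pairs `(γ, υ)` with `γ ∈ Iw_{GL_g}`, `υ ∈ M_g(pℤ_p)` and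
`ᵗγ J̆ υ = ᵗυ J̆ γ`. -/
def T0set (p g : ℕ) [Fact p.Prime] :
    Set (Matrix (Fin g) (Fin g) ℤ_[p] × Matrix (Fin g) (Fin g) ℤ_[p]) :=
  {x | x.1 ∈ IwGL p g ∧ (∀ i j : Fin g, (p : ℤ_[p]) ∣ x.2 i j) ∧
    x.1ᵀ * Jb g ℤ_[p] * x.2 = x.2ᵀ * Jb g ℤ_[p] * x.1}

/-- The monoid `Ξ = [[Iw_{GL_g}, M_g(ℤ_p)], [M_g(pℤ_p), M_g(ℤ_p)]] ∩ GSp_{2g}(ℚ_p)`. -/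
def XiSet (p g : ℕ) [Fact p.Prime] :
    Set (Matrix (Fin g ⊕ Fin g) (Fin g ⊕ Fin g) ℤ_[p]) :=
  {α | IsGSp (toQ α) ∧ α.toBlocks₁₁ ∈ IwGL p g ∧
    ∀ i j : Fin g, (p : ℤ_[p]) ∣ α.toBlocks₂₁ i j}

/-- The left action of `Ξ` on pairs `(γ, υ)`:
`α · (γ, υ) = (α_aγ + α_bυ, α_cγ + α_dυ)`. -/
noncomputable def XiAct (p g : ℕ) [Fact p.Prime]
    (α : Matrix (Fin g ⊕ Fin g) (Fin g ⊕ Fin g) ℤ_[p])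
    (x : Matrix (Fin g) (Fin g) ℤ_[p] × Matrix (Fin g) (Fin g) ℤ_[p]) :
    Matrix (Fin g) (Fin g) ℤ_[p] × Matrix (Fin g) (Fin g) ℤ_[p] :=
  (α.toBlocks₁₁ * x.1 + α.toBlocks₁₂ * x.2, α.toBlocks₂₁ * x.1 + α.toBlocks₂₂ * x.2)

/-!
Stack a pair `(γ, υ)` into the `2g × g` matrix `X` with blocks `γ` above `υ`. The action of `α` is
then `X ↦ αX`, so it is associative, and the symmetry condition defining `T₀` says that the columns
of `X` span an isotropic subspace, `ᵗX J X = 0`. This can be checked over `ℚ_p`, where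
similitudes preserve it.

The congruence conditions can be read off the reduction mod `p`. There `α_c` and `υ` vanish and
`α_aγ + α_bυ` becomes the product of two invertible upper triangular matrices; a matrix over the
local ring `ℤ_p` is invertible as soon as its reduction is. Closure of `Ξ` under multiplication
is an instance of the same computation, because the left block column of `αα'` is `α` applied to
the left block column of `α'`.
-/

section SymplecticGram

variable {g : ℕ} {R S m n : Type*} [CommRing R] [CommRing S]

/-- The Gram matrix `ᵗX J X` of the columns of `X` for the symplectic form given by `J`; it
measures how far they are from spanning an isotropic submodule. -/
def symplecticGram (X : Matrix (Fin g ⊕ Fin g) n R) : Matrix n n R :=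
  Xᵀ * Jmat g R * X

theorem symplecticGram_mul [Fintype m] (M : Matrix (Fin g ⊕ Fin g) m R) (X : Matrix m n R) :
    symplecticGram (M * X) = Xᵀ * symplecticGram M * X := by
  simp only [symplecticGram, transpose_mul, Matrix.mul_assoc]

theorem symplecticGram_fromRows (γ υ : Matrix (Fin g) n R) :
    symplecticGram (fromRows γ υ) = υᵀ * Jb g R * γ - γᵀ * Jb g R * υ := by
  simp only [symplecticGram, Jmat, transpose_fromRows, fromCols_mul_fromBlocks,
    fromCols_mul_fromRows, Matrix.mul_zero, Matrix.mul_neg, Matrix.neg_mul, zero_add, add_zero,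
    sub_eq_add_neg]

theorem symplecticGram_fromRows_eq_zero_iff {γ υ : Matrix (Fin g) n R} :
    symplecticGram (fromRows γ υ) = 0 ↔ γᵀ * Jb g R * υ = υᵀ * Jb g R * γ := by
  rw [symplecticGram_fromRows, sub_eq_zero, eq_comm]

theorem Jb_map (f : R →+* S) : (Jb g R).map f = Jb g S := by
  ext i j
  simp only [Jb, map_apply, of_apply, apply_ite f, map_one, map_zero]

theorem Jmat_map (f : R →+* S) : (Jmat g R).map f = Jmat g S := by
  rw [Jmat, fromBlocks_map, Matrix.map_zero f (map_zero f), Matrix.map_neg f (map_neg f), Jb_map,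
    Jmat]

theorem symplecticGram_map (f : R →+* S) (X : Matrix (Fin g ⊕ Fin g) n R) :
    symplecticGram (X.map f) = (symplecticGram X).map f := by
  simp only [symplecticGram, Matrix.map_mul, transpose_map, Jmat_map]

theorem IsGSp.exists_symplecticGram_mul {M : Matrix (Fin g ⊕ Fin g) (Fin g ⊕ Fin g) R}
    (hM : IsGSp M) :
    ∃ s : Rˣ, ∀ X : Matrix (Fin g ⊕ Fin g) n R,
      symplecticGram (M * X) = (s : R) • symplecticGram X := by
  obtain ⟨-, s, hs : symplecticGram M = (s : R) • Jmat g R⟩ := hM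
  refine ⟨s, fun X => ?_⟩
  rw [symplecticGram_mul, hs, Matrix.mul_smul, Matrix.smul_mul, symplecticGram]

theorem IsGSp.mul {M N : Matrix (Fin g ⊕ Fin g) (Fin g ⊕ Fin g) R} (hM : IsGSp M) (hN : IsGSp N) :
    IsGSp (M * N) := by
  obtain ⟨s, hs⟩ := hM.exists_symplecticGram_mul (n := Fin g ⊕ Fin g)
  obtain ⟨hNdet, t, ht : symplecticGram N = (t : R) • Jmat g R⟩ := hN
  refine ⟨det_mul M N ▸ hM.1.mul hNdet, s * t, ?_⟩
  calc symplecticGram (M * N) = (s : R) • symplecticGram N := hs N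
    _ = ((s * t : Rˣ) : R) • Jmat g R := by rw [ht, smul_smul, Units.val_mul]

theorem symplecticGram_mul_eq_zero_of_isGSp_map {f : R →+* S} (hf : Function.Injective f)
    {M : Matrix (Fin g ⊕ Fin g) (Fin g ⊕ Fin g) R} (hM : IsGSp (M.map f))
    {X : Matrix (Fin g ⊕ Fin g) n R} (hX : symplecticGram X = 0) :
    symplecticGram (M * X) = 0 := by
  obtain ⟨s, hs⟩ := hM.exists_symplecticGram_mul (n := n)
  refine map_injective hf ?_
  calc (symplecticGram (M * X)).map f = symplecticGram (M.map f * X.map f) := by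
        rw [← symplecticGram_map, Matrix.map_mul]
    _ = (s : S) • (symplecticGram X).map f := by rw [hs, symplecticGram_map]
    _ = (0 : Matrix n n R).map f := by rw [hX, Matrix.map_zero f (map_zero f), smul_zero]

end SymplecticGram

section Reduction

variable {p : ℕ} [Fact p.Prime]

theorem toZMod_eq_zero_iff_dvd {x : ℤ_[p]} : PadicInt.toZMod x = 0 ↔ (p : ℤ_[p]) ∣ x := by
  rw [← RingHom.mem_ker, PadicInt.ker_toZMod, PadicInt.maximalIdeal_eq_span_p,
    Ideal.mem_span_singleton]

theorem map_toZMod_eq_zero_iff {m n : Type*} {M : Matrix m n ℤ_[p]} :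
    M.map PadicInt.toZMod = 0 ↔ ∀ i j, (p : ℤ_[p]) ∣ M i j := by
  simp only [← ext_iff, map_apply, Matrix.zero_apply, toZMod_eq_zero_iff_dvd]

theorem isUnit_det_map_toZMod_iff {n : Type*} [Fintype n] [DecidableEq n]
    {M : Matrix n n ℤ_[p]} : IsUnit (M.map PadicInt.toZMod).det ↔ IsUnit M.det := by
  have : IsLocalHom (PadicInt.toZMod (p := p)) := .of_surjective _ (ZMod.ringHom_surjective _)
  rw [← RingHom.mapMatrix_apply, ← RingHom.map_det, isUnit_map_iff]

theorem mem_IwGL_iff_map_toZMod {g : ℕ} {M : Matrix (Fin g) (Fin g) ℤ_[p]} :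
    M ∈ IwGL p g ↔
      IsUnit (M.map PadicInt.toZMod).det ∧ (M.map PadicInt.toZMod).BlockTriangular id := by
  simp only [IwGL, Set.mem_ofPred_eq, isUnit_det_map_toZMod_iff, BlockTriangular, id, map_apply,
    toZMod_eq_zero_iff_dvd]

end Reduction

section XiAction

variable {p g : ℕ} [Fact p.Prime]
  {α : Matrix (Fin g ⊕ Fin g) (Fin g ⊕ Fin g) ℤ_[p]}
  {x : Matrix (Fin g) (Fin g) ℤ_[p] × Matrix (Fin g) (Fin g) ℤ_[p]}

/-- The pairs `(γ, υ)` with `γ ∈ Iw_{GL_g}` and `υ ∈ M_g(pℤ_p)`: the congruence conditions common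
to elements of `T₀` and to the left block columns of elements of `Ξ`. -/
def IwahoriPairs (p g : ℕ) [Fact p.Prime] :
    Set (Matrix (Fin g) (Fin g) ℤ_[p] × Matrix (Fin g) (Fin g) ℤ_[p]) :=
  {x | x.1 ∈ IwGL p g ∧ ∀ i j, (p : ℤ_[p]) ∣ x.2 i j}

/-- The left block column of `α`, as the pair `(α_a, α_c)`. -/
def leftBlocks {n R : Type*} (α : Matrix (n ⊕ n) (n ⊕ n) R) : Matrix n n R × Matrix n n R :=
  (α.toBlocks₁₁, α.toBlocks₂₁)

theorem mem_XiSet_iff : α ∈ XiSet p g ↔ IsGSp (toQ α) ∧ leftBlocks α ∈ IwahoriPairs p g :=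
  Iff.rfl

theorem mem_T0set_iff :
    x ∈ T0set p g ↔ x ∈ IwahoriPairs p g ∧ symplecticGram (fromRows x.1 x.2) = 0 := by
  rw [symplecticGram_fromRows_eq_zero_iff]
  exact and_assoc.symm

theorem fromRows_XiAct (α : Matrix (Fin g ⊕ Fin g) (Fin g ⊕ Fin g) ℤ_[p])
    (x : Matrix (Fin g) (Fin g) ℤ_[p] × Matrix (Fin g) (Fin g) ℤ_[p]) :
    fromRows (XiAct p g α x).1 (XiAct p g α x).2 = α * fromRows x.1 x.2 := by
  conv_rhs => rw [← fromBlocks_toBlocks α, fromBlocks_mul_fromRows]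
  rfl

theorem XiAct_mul (α α' : Matrix (Fin g ⊕ Fin g) (Fin g ⊕ Fin g) ℤ_[p])
    (x : Matrix (Fin g) (Fin g) ℤ_[p] × Matrix (Fin g) (Fin g) ℤ_[p]) :
    XiAct p g (α * α') x = XiAct p g α (XiAct p g α' x) := by
  refine Prod.ext_iff.mpr (fromRows_inj ?_)
  rw [fromRows_XiAct, fromRows_XiAct, fromRows_XiAct, Matrix.mul_assoc]

theorem leftBlocks_mul (α α' : Matrix (Fin g ⊕ Fin g) (Fin g ⊕ Fin g) ℤ_[p]) :
    leftBlocks (α * α') = XiAct p g α (leftBlocks α') := by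
  conv_lhs => rw [← fromBlocks_toBlocks α, ← fromBlocks_toBlocks α', fromBlocks_multiply]
  rfl

theorem XiAct_mem_IwahoriPairs (hα : leftBlocks α ∈ IwahoriPairs p g)
    (hx : x ∈ IwahoriPairs p g) : XiAct p g α x ∈ IwahoriPairs p g := by
  have ha := mem_IwGL_iff_map_toZMod.mp hα.1
  have hγ := mem_IwGL_iff_map_toZMod.mp hx.1
  have hc : α.toBlocks₂₁.map PadicInt.toZMod = 0 := map_toZMod_eq_zero_iff.mpr hα.2
  have hυ : x.2.map PadicInt.toZMod = 0 := map_toZMod_eq_zero_iff.mpr hx.2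
  have top_reduction : (XiAct p g α x).1.map PadicInt.toZMod =
      α.toBlocks₁₁.map PadicInt.toZMod * x.1.map PadicInt.toZMod := by
    rw [XiAct, Matrix.map_add _ (map_add _), Matrix.map_mul, Matrix.map_mul, hυ, Matrix.mul_zero,
      add_zero]
  have bottom_reduction : (XiAct p g α x).2.map PadicInt.toZMod = 0 := by
    rw [XiAct, Matrix.map_add _ (map_add _), Matrix.map_mul, Matrix.map_mul, hc, hυ,
      Matrix.zero_mul, Matrix.mul_zero, add_zero]
  refine ⟨mem_IwGL_iff_map_toZMod.mpr ?_, map_toZMod_eq_zero_iff.mp bottom_reduction⟩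
  rw [top_reduction, det_mul]
  exact ⟨ha.1.mul hγ.1, ha.2.mul hγ.2⟩

theorem symplecticGram_XiAct_eq_zero (hα : IsGSp (toQ α))
    (hx : symplecticGram (fromRows x.1 x.2) = 0) :
    symplecticGram (fromRows (XiAct p g α x).1 (XiAct p g α x).2) = 0 := by
  rw [fromRows_XiAct]
  exact symplecticGram_mul_eq_zero_of_isGSp_map (f := PadicInt.Coe.ringHom)
    Subtype.coe_injective hα hx

theorem toQ_mul {l m n : Type*} [Fintype m] (A : Matrix l m ℤ_[p]) (B : Matrix m n ℤ_[p]) :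
    toQ (A * B) = toQ A * toQ B :=
  Matrix.map_mul (f := PadicInt.Coe.ringHom)

theorem mul_mem_XiSet {α' : Matrix (Fin g ⊕ Fin g) (Fin g ⊕ Fin g) ℤ_[p]}
    (hα : α ∈ XiSet p g) (hα' : α' ∈ XiSet p g) : α * α' ∈ XiSet p g := by
  rw [mem_XiSet_iff] at hα hα' ⊢
  rw [toQ_mul, leftBlocks_mul]
  exact ⟨hα.1.mul hα'.1, XiAct_mem_IwahoriPairs hα.2 hα'.2⟩

theorem XiAct_mem_T0set (hα : α ∈ XiSet p g) (hx : x ∈ T0set p g) :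
    XiAct p g α x ∈ T0set p g := by
  rw [mem_XiSet_iff] at hα
  rw [mem_T0set_iff] at hx ⊢
  exact ⟨XiAct_mem_IwahoriPairs hα.2 hx.1, symplecticGram_XiAct_eq_zero hα.1 hx.2⟩

end XiAction

theorem statement13 (p g : ℕ) [Fact p.Prime] (hg : 1 ≤ g) :
    (∀ α ∈ XiSet p g, ∀ α' ∈ XiSet p g, α * α' ∈ XiSet p g) ∧
    (∀ α ∈ XiSet p g, ∀ x ∈ T0set p g, XiAct p g α x ∈ T0set p g) ∧
    ∀ α ∈ XiSet p g, ∀ α' ∈ XiSet p g, ∀ x ∈ T0set p g,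
      XiAct p g (α * α') x = XiAct p g α (XiAct p g α' x) := by
  refine ⟨fun α hα α' hα' => ?_, fun α hα x hx => ?_, fun α _ α' _ x _ => ?_⟩
  · exact mul_mem_XiSet hα hα'
  · exact XiAct_mem_T0set hα hx
  · exact XiAct_mul α α' x
end
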